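/- Let Σ be a connected unbalanced signed graph and v a vertex of Σ. Then v is a balancing vertex (i.e. Σ ∖ v is balanced, equivalently v lies in every negative circle) if and only if Σ can be switched so that every edge not incident with v is positive and v is incident with at least one positive and at least one negative edge. -/

import Mathlib

/-- The sign of a walk in a signed graph: the product of the signs of its edges. -/
def walkSign {V : Type*} (G : SimpleGraph V) (σ : Sym2 V → ℤˣ) {u v : V}
    (w : G.Walk u v) : ℤˣ :=
  (w.edges.map σ).prod

/-- A signed graph is balanced if every circle (cycle) is positive. -/
def sgBalanced {V : Type*} (G : SimpleGraph V) (σ : Sym2 V → ℤˣ) : Prop :=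
  ∀ ⦃v : V⦄ (w : G.Walk v v), w.IsCycle → walkSign G σ w = 1

/-- The signature obtained from `σ` by switching with `ζ : V → ℤˣ`:
`σ^ζ(uv) = ζ(u) σ(uv) ζ(v)`. -/
def sgSwitch {V : Type*} (σ : Sym2 V → ℤˣ) (ζ : V → ℤˣ) (e : Sym2 V) : ℤˣ :=
  Sym2.lift ⟨fun u v => ζ u * ζ v, fun u v => mul_comm (ζ u) (ζ v)⟩ e * σ e

/-!
Switching multiplies the sign of a walk by the values of the switching function at its two ends,
so signs of closed walks are invariant. If every circle is positive, then so is every closed walk,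
because shortcutting a walk to a path only discards closed pieces made of a path and one edge, each
a circle or an edge traversed twice. The sign of a walk from a fixed base point is then a function
of its endpoint, and switching by it makes every edge positive (Harary's balance theorem). Applied
to `Σ ∖ v`, this yields the switching. Edges of both signs must occur at `v`: if none is negative,
the whole graph is switched to all positive, and if none is positive, also switching `v` does so.
-/

section

variable {V : Type*} {G : SimpleGraph V} {σ : Sym2 V → ℤˣ} {u v x : V}

open SimpleGraph

@[simp]
theorem walkSign_nil : walkSign G σ (Walk.nil : G.Walk u u) = 1 := rfl

@[simp]
theorem walkSign_cons (h : G.Adj u v) (p : G.Walk v x) :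
    walkSign G σ (.cons h p) = σ s(u, v) * walkSign G σ p := by
  simp [walkSign]

@[simp]
theorem walkSign_toWalk (h : G.Adj u v) : walkSign G σ h.toWalk = σ s(u, v) := by
  simp [Adj.toWalk]

@[simp]
theorem walkSign_append (p : G.Walk u v) (q : G.Walk v x) :
    walkSign G σ (p.append q) = walkSign G σ p * walkSign G σ q := by
  simp [walkSign]

@[simp]
theorem walkSign_reverse (p : G.Walk u v) : walkSign G σ p.reverse = walkSign G σ p := by
  simp [walkSign, List.prod_reverse]

@[simp]
theorem walkSign_copy {u' v' : V} (p : G.Walk u v) (hu : u = u') (hv : v = v') :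
    walkSign G σ (p.copy hu hv) = walkSign G σ p := by
  simp [walkSign]

@[simp]
theorem walkSign_transfer {H : SimpleGraph V} (p : G.Walk u v) (hp : ∀ e ∈ p.edges, e ∈ H.edgeSet) :
    walkSign H σ (p.transfer H hp) = walkSign G σ p := by
  simp [walkSign]

@[simp]
theorem sgSwitch_mk (σ : Sym2 V → ℤˣ) (ζ : V → ℤˣ) (u v : V) :
    sgSwitch σ ζ s(u, v) = ζ u * ζ v * σ s(u, v) := rfl

theorem sgSwitch_update_of_notMem [DecidableEq V] (σ : Sym2 V → ℤˣ) (ζ : V → ℤˣ) (a : ℤˣ)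
    {e : Sym2 V} (hv : v ∉ e) : sgSwitch σ (Function.update ζ v a) e = sgSwitch σ ζ e := by
  induction e with
  | _ x y =>
    obtain ⟨hx, hy⟩ : x ≠ v ∧ y ≠ v := by simpa [eq_comm] using hv
    simp [hx, hy]

theorem sgSwitch_update_neg [DecidableEq V] (σ : Sym2 V → ℤˣ) (ζ : V → ℤˣ) (h : u ≠ v) :
    sgSwitch σ (Function.update ζ v (-ζ v)) s(v, u) = -sgSwitch σ ζ s(v, u) := by
  simp [h]

theorem walkSign_sgSwitch (ζ : V → ℤˣ) (p : G.Walk u v) :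
    walkSign G (sgSwitch σ ζ) p = ζ u * ζ v * walkSign G σ p := by
  induction p with
  | nil => simp
  | @cons u v x h p ih =>
    calc walkSign G (sgSwitch σ ζ) (.cons h p)
        = ζ v * ζ v * (ζ u * ζ x * (σ s(u, v) * walkSign G σ p)) := by
          rw [walkSign_cons, ih, sgSwitch_mk]; ac_rfl
      _ = ζ u * ζ x * walkSign G σ (.cons h p) := by
          rw [Int.units_mul_self, one_mul, walkSign_cons]

theorem sgBalanced_sgSwitch_iff {ζ : V → ℤˣ} :
    sgBalanced G (sgSwitch σ ζ) ↔ sgBalanced G σ := by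
  simp [sgBalanced, walkSign_sgSwitch]

theorem sgBalanced_of_forall_eq_one (h : ∀ e ∈ G.edgeSet, σ e = 1) : sgBalanced G σ := by
  refine fun _ w _ => List.prod_eq_one fun s hs => ?_
  obtain ⟨e, he, rfl⟩ := List.mem_map.1 hs
  exact h e (w.edges_subset_edgeSet he)

namespace sgBalanced

theorem walkSign_eq_of_isPath_of_adj (hb : sgBalanced G σ) (h : G.Adj u v) {p : G.Walk u v}
    (hp : p.IsPath) : walkSign G σ p = σ s(u, v) := by
  by_cases he : s(u, v) ∈ p.edges
  · rw [hp.eq_adj_toWalk_of_mem_edges he, walkSign_toWalk]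
  · rw [Sym2.eq_swap] at he ⊢
    have hcycle : walkSign G σ (.cons h.symm p) = 1 :=
      hb _ ((p.cons_isCycle_iff h.symm).2 ⟨hp, he⟩)
    rwa [walkSign_cons, mul_eq_one_iff_inv_eq, Int.units_inv_eq_self, eq_comm] at hcycle

theorem walkSign_bypass [DecidableEq V] (hb : sgBalanced G σ) (p : G.Walk u v) :
    walkSign G σ p.bypass = walkSign G σ p := by
  induction p with
  | nil => rfl
  | @cons u v x h p ih =>
    rw [walkSign_cons, ← ih, Walk.bypass]
    split_ifs with hu
    · have hloop : walkSign G σ (p.bypass.takeUntil u hu) = σ s(u, v) :=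
        Sym2.eq_swap ▸ hb.walkSign_eq_of_isPath_of_adj h.symm (p.bypass_isPath.takeUntil hu)
      calc walkSign G σ (p.bypass.dropUntil u hu)
          = σ s(u, v) * (σ s(u, v) * walkSign G σ (p.bypass.dropUntil u hu)) := by
            rw [← mul_assoc, Int.units_mul_self, one_mul]
        _ = σ s(u, v) * walkSign G σ p.bypass := by
            rw [← hloop, ← walkSign_append, Walk.take_spec, hloop]
    · rw [walkSign_cons]

theorem walkSign_eq_one (hb : sgBalanced G σ) (p : G.Walk u u) : walkSign G σ p = 1 := by
  classical
  rw [← hb.walkSign_bypass p, (Walk.isPath_iff_nil.1 p.bypass_isPath).eq_nil, walkSign_nil]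

theorem walkSign_eq (hb : sgBalanced G σ) (p q : G.Walk u v) :
    walkSign G σ p = walkSign G σ q := by
  have hclosed : walkSign G σ (p.append q.reverse) = 1 := hb.walkSign_eq_one _
  rwa [walkSign_append, walkSign_reverse, mul_eq_one_iff_eq_inv, Int.units_inv_eq_self] at hclosed

theorem exists_sgSwitch_eq_one (hb : sgBalanced G σ) :
    ∃ ζ : V → ℤˣ, ∀ e ∈ G.edgeSet, sgSwitch σ ζ e = 1 := by
  have hreach (x : V) : G.Reachable (G.connectedComponentMk x).out x :=
    ConnectedComponent.exact (Quot.out_eq _)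
  let W (x : V) : G.Walk (G.connectedComponentMk x).out x := (hreach x).some
  refine ⟨fun x => walkSign G σ (W x), fun e he => ?_⟩
  induction e with
  | _ x y =>
    have hxy : G.Adj x y := he
    have hroot : (G.connectedComponentMk y).out = (G.connectedComponentMk x).out := by
      rw [ConnectedComponent.sound hxy.reachable]
    have hstep : walkSign G σ (W y) = walkSign G σ (W x) * σ s(x, y) := by
      simpa using hb.walkSign_eq ((W y).copy hroot rfl) ((W x).append hxy.toWalk)
    rw [sgSwitch_mk, hstep, ← mul_assoc, Int.units_mul_self, one_mul, Int.units_mul_self]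

end sgBalanced

theorem sgBalanced_iff_exists_sgSwitch_eq_one :
    sgBalanced G σ ↔ ∃ ζ : V → ℤˣ, ∀ e ∈ G.edgeSet, sgSwitch σ ζ e = 1 :=
  ⟨sgBalanced.exists_sgSwitch_eq_one,
    fun ⟨_, hζ⟩ => sgBalanced_sgSwitch_iff.1 (sgBalanced_of_forall_eq_one hζ)⟩

theorem mem_edgeSet_deleteIncidenceSet_iff {e : Sym2 V} :
    e ∈ (G.deleteIncidenceSet v).edgeSet ↔ e ∈ G.edgeSet ∧ v ∉ e := by
  rw [edgeSet_deleteIncidenceSet, incidenceSet]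
  grind

theorem sgBalanced_deleteIncidenceSet_iff :
    sgBalanced (G.deleteIncidenceSet v) σ ↔
      ∀ ⦃a : V⦄ (w : G.Walk a a), w.IsCycle → v ∉ w.support → walkSign G σ w = 1 := by
  constructor
  · intro hb a w hw hv
    have hmem : ∀ e ∈ w.edges, e ∈ (G.deleteIncidenceSet v).edgeSet := fun e he =>
      mem_edgeSet_deleteIncidenceSet_iff.2
        ⟨w.edges_subset_edgeSet he, fun hve => hv (Walk.mem_support_of_mem_edges he hve)⟩
    simpa using hb _ (hw.transfer hmem)
  · intro h a w hw
    have hmem : ∀ e ∈ w.edges, e ∈ G.edgeSet ∧ v ∉ e := fun e he =>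
      mem_edgeSet_deleteIncidenceSet_iff.1 (w.edges_subset_edgeSet he)
    have hv : v ∉ w.support := by
      rw [Walk.mem_support_iff_exists_mem_edges_of_not_nil hw.not_nil]
      exact fun ⟨e, he, hve⟩ => (hmem e he).2 hve
    simpa using h (w.transfer G fun e he => (hmem e he).1) (hw.transfer _) (by simpa using hv)

theorem exists_adj_sgSwitch_eq_neg_one (hunbal : ¬ sgBalanced G σ) {ζ : V → ℤˣ}
    (hζ : ∀ e ∈ G.edgeSet, v ∉ e → sgSwitch σ ζ e = 1) :
    ∃ b : V, G.Adj v b ∧ sgSwitch σ ζ s(v, b) = -1 := by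
  by_contra! hne
  refine hunbal (sgBalanced_iff_exists_sgSwitch_eq_one.2 ⟨ζ, fun e he => ?_⟩)
  by_cases hv : v ∈ e
  · obtain ⟨b, rfl⟩ := hv
    exact (Int.units_eq_one_or _).resolve_right (hne b he)
  · exact hζ e he hv

theorem exists_adj_sgSwitch_eq_one (hunbal : ¬ sgBalanced G σ) {ζ : V → ℤˣ}
    (hζ : ∀ e ∈ G.edgeSet, v ∉ e → sgSwitch σ ζ e = 1) :
    ∃ a : V, G.Adj v a ∧ sgSwitch σ ζ s(v, a) = 1 := by
  classical
  obtain ⟨a, hva, ha⟩ : ∃ a, G.Adj v a ∧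
      sgSwitch σ (Function.update ζ v (-ζ v)) s(v, a) = -1 :=
    exists_adj_sgSwitch_eq_neg_one hunbal fun e he hv => by
      rw [sgSwitch_update_of_notMem σ ζ _ hv, hζ e he hv]
  rw [sgSwitch_update_neg σ ζ hva.ne'] at ha
  exact ⟨a, hva, neg_injective ha⟩

end

theorem balancing_vertex_iff_switching_general {V : Type*}
    (G : SimpleGraph V) (σ : Sym2 V → ℤˣ) (hunbal : ¬ sgBalanced G σ) (v : V) :
    (∀ ⦃a : V⦄ (w : G.Walk a a), w.IsCycle → v ∉ w.support → walkSign G σ w = 1) ↔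
      ∃ ζ : V → ℤˣ,
        (∀ e ∈ G.edgeSet, v ∉ e → sgSwitch σ ζ e = 1) ∧
        (∃ a : V, G.Adj v a ∧ sgSwitch σ ζ s(v, a) = 1) ∧
        (∃ b : V, G.Adj v b ∧ sgSwitch σ ζ s(v, b) = -1) := by
  rw [← sgBalanced_deleteIncidenceSet_iff, sgBalanced_iff_exists_sgSwitch_eq_one]
  simp only [mem_edgeSet_deleteIncidenceSet_iff, and_imp]
  exact exists_congr fun ζ =>
    ⟨fun hζ => ⟨hζ, exists_adj_sgSwitch_eq_one hunbal hζ,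
      exists_adj_sgSwitch_eq_neg_one hunbal hζ⟩, And.left⟩

/-- In a connected unbalanced signed graph, a vertex `v` is a balancing vertex (it lies in
every negative circle, i.e. deleting it leaves a balanced graph) iff the graph can be
switched so that every edge not incident with `v` is positive while `v` is incident with
at least one positive and at least one negative edge. -/
theorem balancing_vertex_iff_switching {V : Type*} [Fintype V]
    (G : SimpleGraph V) (σ : Sym2 V → ℤˣ)
    (hconn : G.Connected) (hunbal : ¬ sgBalanced G σ) (v : V) :
    (∀ ⦃a : V⦄ (w : G.Walk a a), w.IsCycle → v ∉ w.support → walkSign G σ w = 1) ↔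
      ∃ ζ : V → ℤˣ,
        (∀ e ∈ G.edgeSet, v ∉ e → sgSwitch σ ζ e = 1) ∧
        (∃ a : V, G.Adj v a ∧ sgSwitch σ ζ s(v, a) = 1) ∧
        (∃ b : V, G.Adj v b ∧ sgSwitch σ ζ s(v, b) = -1) :=
  balancing_vertex_iff_switching_general G σ hunbal v
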